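/- arXiv:1310.1781 — 2 statements merged into one kernel-verified Lean document; each statement's English description precedes it below -/
import Mathlib

section
/- Let λ ∈ ℝ with λ ≠ 0 and let Γ : ℝ² → ℝ be smooth. Define the matrices U = [[0, λ m1, 1], [λ n1, 0, λ m2], [1, λ n2, 0]] and Ṽ = −λ Γ · [[0, m1, 0], [n1, 0, m2], [0, n2, 0]]. Then the zero-curvature equation ∂ₜU − ∂ₓṼ + U·Ṽ − Ṽ·U = 0 holds identically on ℝ² if and only if (m1, m2, n1, n2) satisfies the system: ∂ₜm1 + ∂ₓ(Γ m1) − n2 Γ = 0, ∂ₜm2 + ∂ₓ(Γ m2) + n1 Γ = 0, ∂ₜn1 + ∂ₓ(Γ n1) + m2 Γ = 0, ∂ₜn2 + ∂ₓ(Γ n2) − m1 Γ = 0. -/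
/-- Partial derivative with respect to the first (space) variable. -/
noncomputable def pX (f : ℝ × ℝ → ℝ) : ℝ × ℝ → ℝ :=
  fun p => deriv (fun x => f (x, p.2)) p.1

/-- Partial derivative with respect to the second (time) variable. -/
noncomputable def pT (f : ℝ × ℝ → ℝ) : ℝ × ℝ → ℝ :=
  fun p => deriv (fun t => f (p.1, t)) p.2

/-!
Write `A` for the matrix with entries `m1, m2, n1, n2` and `E = e₁₃ + e₃₁`, so that
`U = lam • A + E` and `W = -(lam * Γ) • A`. Since `A` commutes with itself, `[U, W]` is
`-(lam * Γ) • [E, A]`, and the curvature is `lam • (∂ₜ A + ∂ₓ (Γ A) - Γ [E, A])`. Bracketing with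
`E` preserves the shape of `A`, so for `lam ≠ 0` this vanishes exactly when its four entries at the
positions of `m1, m2, n1, n2` do.
-/

theorem pT_const_mul (c : ℝ) (f : ℝ × ℝ → ℝ) (p : ℝ × ℝ) :
    pT (fun q => c * f q) p = c * pT f p :=
  deriv_const_mul_field c

theorem pT_add_const (f : ℝ × ℝ → ℝ) (c : ℝ) (p : ℝ × ℝ) :
    pT (fun q => f q + c) p = pT f p :=
  deriv_add_const c

theorem pT_const (c : ℝ) (p : ℝ × ℝ) : pT (fun _ => c) p = 0 :=
  deriv_const p.2 c

theorem pX_const_mul (c : ℝ) (f : ℝ × ℝ → ℝ) (p : ℝ × ℝ) :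
    pX (fun q => c * f q) p = c * pX f p :=
  deriv_const_mul_field c

theorem pX_const (c : ℝ) (p : ℝ × ℝ) : pX (fun _ => c) p = 0 :=
  deriv_const p.1 c

theorem smul_add_lie_smul_self {R A : Type*} [CommMonoid R] [NonUnitalNonAssocRing A]
    [DistribMulAction R A] [IsScalarTower R A A] [SMulCommClass R A A] (a b : R) (x y : A) :
    ⁅a • x + y, b • x⁆ = b • ⁅y, x⁆ := by
  simp only [Ring.lie_def, add_mul, mul_add, smul_mul_assoc, mul_smul_comm, smul_sub,
    smul_add, smul_comm a b, add_sub_add_left_eq_sub]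

section Curvature

variable {n : Type*} [Fintype n]

/-- The curvature `∂ₜ U - ∂ₓ V + [U, V]` of the pair `(U, V)`, whose vanishing is the
compatibility condition of `∂ₓ ψ = U ψ`, `∂ₜ ψ = V ψ`; derivatives are taken entrywise. -/
noncomputable def curvature (U V : ℝ × ℝ → Matrix n n ℝ) (p : ℝ × ℝ) : Matrix n n ℝ :=
  Matrix.of fun i j => pT (fun q => U q i j) p - pX (fun q => V q i j) p + ⁅U p, V p⁆ i j

/-- The expression `∂ₜ A + ∂ₓ (Γ A) - Γ [E, A]`, with entrywise derivatives: the left-hand side of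
the evolution equation for `A` encoded by the pair `U = lam • A + E`, `V = -(lam * Γ) • A`. -/
noncomputable def transportExpr (Γ : ℝ × ℝ → ℝ) (E : Matrix n n ℝ)
    (A : ℝ × ℝ → Matrix n n ℝ) (p : ℝ × ℝ) : Matrix n n ℝ :=
  Matrix.of fun i j =>
    pT (fun q => A q i j) p + pX (fun q => Γ q * A q i j) p - Γ p * ⁅E, A p⁆ i j

theorem curvature_smul_add_const (lam : ℝ) (Γ : ℝ × ℝ → ℝ) (E : Matrix n n ℝ)
    (A : ℝ × ℝ → Matrix n n ℝ) (p : ℝ × ℝ) :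
    curvature (fun q => lam • A q + E) (fun q => (-lam * Γ q) • A q) p =
      lam • transportExpr Γ E A p := by
  ext i j
  simp only [curvature, transportExpr, smul_add_lie_smul_self, Matrix.of_apply, Matrix.add_apply,
    Matrix.smul_apply, smul_eq_mul, mul_assoc, pT_add_const, pT_const_mul, pX_const_mul]
  ring

end Curvature

section HollowTridiagonal

variable {R : Type*}

/-- The `3 × 3` tridiagonal matrix with zero diagonal, superdiagonal `(a₁, a₂)` and subdiagonal
`(b₁, b₂)`: the shape of the part of the Lax pair that depends on the unknowns. -/
def hollowTridiagonal [Zero R] (a₁ a₂ b₁ b₂ : R) : Matrix (Fin 3) (Fin 3) R :=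
  !![0, a₁, 0;
     b₁, 0, a₂;
     0, b₂, 0]

/-- The matrix `e₁₃ + e₃₁`, the constant part of the Lax pair. -/
def cornerMatrix (R : Type*) [Zero R] [One R] : Matrix (Fin 3) (Fin 3) R :=
  !![0, 0, 1;
     0, 0, 0;
     1, 0, 0]

theorem hollowTridiagonal_eq_zero_iff [Zero R] {a₁ a₂ b₁ b₂ : R} :
    hollowTridiagonal a₁ a₂ b₁ b₂ = 0 ↔ a₁ = 0 ∧ a₂ = 0 ∧ b₁ = 0 ∧ b₂ = 0 := by
  constructor
  · intro h
    exact ⟨congr_fun₂ h 0 1, congr_fun₂ h 1 2, congr_fun₂ h 1 0, congr_fun₂ h 2 1⟩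
  · rintro ⟨rfl, rfl, rfl, rfl⟩
    ext i j
    fin_cases i <;> fin_cases j <;> rfl

theorem cornerMatrix_lie_hollowTridiagonal [NonAssocRing R] (a₁ a₂ b₁ b₂ : R) :
    ⁅cornerMatrix R, hollowTridiagonal a₁ a₂ b₁ b₂⁆ = hollowTridiagonal b₂ (-b₁) (-a₂) a₁ := by
  ext i j
  fin_cases i <;> fin_cases j <;> simp [cornerMatrix, hollowTridiagonal, Ring.lie_def]

theorem smul_hollowTridiagonal_add_cornerMatrix [NonAssocSemiring R] (c a₁ a₂ b₁ b₂ : R) :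
    c • hollowTridiagonal a₁ a₂ b₁ b₂ + cornerMatrix R =
      !![0, c * a₁, 1;
         c * b₁, 0, c * a₂;
         1, c * b₂, 0] := by
  simp [hollowTridiagonal, cornerMatrix]

end HollowTridiagonal

theorem transportExpr_cornerMatrix_hollowTridiagonal (Γ m1 m2 n1 n2 : ℝ × ℝ → ℝ) (p : ℝ × ℝ) :
    transportExpr Γ (cornerMatrix ℝ)
        (fun q => hollowTridiagonal (m1 q) (m2 q) (n1 q) (n2 q)) p =
      hollowTridiagonal
        (pT m1 p + pX (fun q => Γ q * m1 q) p - n2 p * Γ p)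
        (pT m2 p + pX (fun q => Γ q * m2 q) p + n1 p * Γ p)
        (pT n1 p + pX (fun q => Γ q * n1 q) p + m2 p * Γ p)
        (pT n2 p + pX (fun q => Γ q * n2 q) p - m1 p * Γ p) := by
  ext i j
  rw [transportExpr, Matrix.of_apply, cornerMatrix_lie_hollowTridiagonal]
  fin_cases i <;> fin_cases j <;> simp [hollowTridiagonal, pT_const, pX_const, mul_comm]

theorem stmt_1
    (m1 m2 n1 n2 Γ : ℝ × ℝ → ℝ)
    (hm1 : ContDiff ℝ (⊤ : ℕ∞) m1) (hm2 : ContDiff ℝ (⊤ : ℕ∞) m2)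
    (hn1 : ContDiff ℝ (⊤ : ℕ∞) n1) (hn2 : ContDiff ℝ (⊤ : ℕ∞) n2)
    (hΓ : ContDiff ℝ (⊤ : ℕ∞) Γ)
    (lam : ℝ) (hlam : lam ≠ 0)
    (U W : ℝ × ℝ → Matrix (Fin 3) (Fin 3) ℝ)
    (hU : U = fun p => !![0, lam * m1 p, 1;
                          lam * n1 p, 0, lam * m2 p;
                          1, lam * n2 p, 0])
    (hW : W = fun p => (-lam * Γ p) • !![0, m1 p, 0;
                                         n1 p, 0, m2 p;
                                         0, n2 p, 0]) :
    (∀ p : ℝ × ℝ, ∀ i j : Fin 3,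
        pT (fun q => U q i j) p - pX (fun q => W q i j) p
          + (U p * W p - W p * U p) i j = 0)
    ↔
    (∀ p : ℝ × ℝ,
        pT m1 p + pX (fun q => Γ q * m1 q) p - n2 p * Γ p = 0 ∧
        pT m2 p + pX (fun q => Γ q * m2 q) p + n1 p * Γ p = 0 ∧
        pT n1 p + pX (fun q => Γ q * n1 q) p + m2 p * Γ p = 0 ∧
        pT n2 p + pX (fun q => Γ q * n2 q) p - m1 p * Γ p = 0) := by
  set A : ℝ × ℝ → Matrix (Fin 3) (Fin 3) ℝ :=
    fun q => hollowTridiagonal (m1 q) (m2 q) (n1 q) (n2 q) with hA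
  have hUA : U = fun q => lam • A q + cornerMatrix ℝ := by
    simp only [hU, hA, smul_hollowTridiagonal_add_cornerMatrix]
  have hWA : W = fun q => (-lam * Γ q) • A q := hW
  refine forall_congr' fun p => ?_
  calc
    _ ↔ curvature U W p = 0 := Matrix.ext_iff
    _ ↔ transportExpr Γ (cornerMatrix ℝ) A p = 0 := by
      rw [hUA, hWA, curvature_smul_add_const, smul_eq_zero_iff_right hlam]
    _ ↔ _ := by
      rw [transportExpr_cornerMatrix_hollowTridiagonal, hollowTridiagonal_eq_zero_iff]
end

section
/- Let Γ : ℝ² → ℝ be smooth and suppose smooth functions (m1, m2, n1, n2) satisfy the system: ∂ₜm1 + ∂ₓ(Γ m1) − n2 Γ = 0, ∂ₜm2 + ∂ₓ(Γ m2) + n1 Γ = 0, ∂ₜn1 + ∂ₓ(Γ n1) + m2 Γ = 0, ∂ₜn2 + ∂ₓ(Γ n2) − m1 Γ = 0. Then P = m1 n1 + m2 n2 satisfies the identity ∂ₜP + Γ ∂ₓP + 2 (∂ₓΓ) P = 0 identically on ℝ². -/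
/-!
Along the vector field `∂ₜ + Γ ∂ₓ`, the operator `f ↦ ∂ₜ f + ∂ₓ (Γ f)` is the Lie derivative on
spatial densities of weight `1`, and `P ↦ ∂ₜ P + Γ ∂ₓ P + 2 Γₓ P` the one on densities of weight
`2`. The Leibniz rule adds weights, so the Lie derivative of `P = m · n` is
`Γ (n2, -n1) · n + m · Γ (-m2, m1)`, and both terms vanish because the rotation
`(a, b) ↦ (b, -a)` is skew-symmetric.
-/

/-- The Lie derivative along `∂ₜ + Γ ∂ₓ` of the density `f (dx)ᵏ` of weight `k` in the space
variable (so `dt` is set to `0`), expressed through its coefficient `f`; the weight may be any real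
number. -/
noncomputable def densityLieDeriv (k : ℝ) (Γ f : ℝ × ℝ → ℝ) (p : ℝ × ℝ) : ℝ :=
  pT f p + Γ p * pX f p + k * pX Γ p * f p

section

variable {f g Γ : ℝ × ℝ → ℝ} {p : ℝ × ℝ}

lemma pX_eq_fderiv (hf : DifferentiableAt ℝ f p) : pX f p = fderiv ℝ f p (1, 0) :=
  (hf.hasFDerivAt.comp_hasDerivAt p.1
    ((hasDerivAt_id p.1).prodMk (hasDerivAt_const p.1 p.2))).deriv

lemma pT_eq_fderiv (hf : DifferentiableAt ℝ f p) : pT f p = fderiv ℝ f p (0, 1) :=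
  (hf.hasFDerivAt.comp_hasDerivAt p.2
    ((hasDerivAt_const p.2 p.1).prodMk (hasDerivAt_id p.2))).deriv

lemma densityLieDeriv_eq_fderiv (k : ℝ) (hf : DifferentiableAt ℝ f p) :
    densityLieDeriv k Γ f p = fderiv ℝ f p (Γ p, 1) + k * pX Γ p * f p := by
  have hv : ((Γ p, 1) : ℝ × ℝ) = (0, 1) + Γ p • (1, 0) := by simp
  rw [densityLieDeriv, pT_eq_fderiv hf, pX_eq_fderiv hf, hv, map_add, map_smul, smul_eq_mul]

lemma densityLieDeriv_add (k : ℝ) (hf : DifferentiableAt ℝ f p) (hg : DifferentiableAt ℝ g p) :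
    densityLieDeriv k Γ (fun q => f q + g q) p =
      densityLieDeriv k Γ f p + densityLieDeriv k Γ g p := by
  rw [densityLieDeriv_eq_fderiv k (hf.fun_add hg), densityLieDeriv_eq_fderiv k hf,
    densityLieDeriv_eq_fderiv k hg, fderiv_fun_add hf hg, add_apply]
  ring

lemma densityLieDeriv_mul (j k : ℝ) (hf : DifferentiableAt ℝ f p) (hg : DifferentiableAt ℝ g p) :
    densityLieDeriv (j + k) Γ (fun q => f q * g q) p =
      densityLieDeriv j Γ f p * g p + f p * densityLieDeriv k Γ g p := by
  rw [densityLieDeriv_eq_fderiv _ (hf.fun_mul hg), densityLieDeriv_eq_fderiv j hf,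
    densityLieDeriv_eq_fderiv k hg, fderiv_fun_mul hf hg]
  simp only [add_apply, smul_apply, smul_eq_mul]
  ring

lemma densityLieDeriv_one (hΓ : DifferentiableAt ℝ Γ p) (hf : DifferentiableAt ℝ f p) :
    densityLieDeriv 1 Γ f p = pT f p + pX (fun q => Γ q * f q) p := by
  rw [densityLieDeriv, pX_eq_fderiv (hΓ.fun_mul hf), pX_eq_fderiv hΓ, pX_eq_fderiv hf,
    fderiv_fun_mul hΓ hf]
  simp only [add_apply, smul_apply, smul_eq_mul]
  ring

end

theorem stmt_4_general {m1 m2 n1 n2 Γ : ℝ × ℝ → ℝ} {p : ℝ × ℝ}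
    (hm1 : DifferentiableAt ℝ m1 p) (hm2 : DifferentiableAt ℝ m2 p)
    (hn1 : DifferentiableAt ℝ n1 p) (hn2 : DifferentiableAt ℝ n2 p)
    (hΓ : DifferentiableAt ℝ Γ p)
    (eq_m1 : pT m1 p + pX (fun q => Γ q * m1 q) p - n2 p * Γ p = 0)
    (eq_m2 : pT m2 p + pX (fun q => Γ q * m2 q) p + n1 p * Γ p = 0)
    (eq_n1 : pT n1 p + pX (fun q => Γ q * n1 q) p + m2 p * Γ p = 0)
    (eq_n2 : pT n2 p + pX (fun q => Γ q * n2 q) p - m1 p * Γ p = 0) :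
    pT (fun q => m1 q * n1 q + m2 q * n2 q) p + Γ p * pX (fun q => m1 q * n1 q + m2 q * n2 q) p +
      2 * pX Γ p * (m1 p * n1 p + m2 p * n2 p) = 0 := by
  change densityLieDeriv 2 Γ (fun q => m1 q * n1 q + m2 q * n2 q) p = 0
  rw [← densityLieDeriv_one hΓ hm1] at eq_m1
  rw [← densityLieDeriv_one hΓ hm2] at eq_m2
  rw [← densityLieDeriv_one hΓ hn1] at eq_n1
  rw [← densityLieDeriv_one hΓ hn2] at eq_n2
  rw [densityLieDeriv_add 2 (hm1.fun_mul hn1) (hm2.fun_mul hn2), ← one_add_one_eq_two,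
    densityLieDeriv_mul 1 1 hm1 hn1, densityLieDeriv_mul 1 1 hm2 hn2]
  linear_combination n1 p * eq_m1 + n2 p * eq_m2 + m1 p * eq_n1 + m2 p * eq_n2

theorem stmt_4
    (m1 m2 n1 n2 Γ : ℝ × ℝ → ℝ)
    (hm1 : ContDiff ℝ (⊤ : ℕ∞) m1) (hm2 : ContDiff ℝ (⊤ : ℕ∞) m2)
    (hn1 : ContDiff ℝ (⊤ : ℕ∞) n1) (hn2 : ContDiff ℝ (⊤ : ℕ∞) n2)
    (hΓ : ContDiff ℝ (⊤ : ℕ∞) Γ)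
    (hsys : ∀ p : ℝ × ℝ,
        pT m1 p + pX (fun q => Γ q * m1 q) p - n2 p * Γ p = 0 ∧
        pT m2 p + pX (fun q => Γ q * m2 q) p + n1 p * Γ p = 0 ∧
        pT n1 p + pX (fun q => Γ q * n1 q) p + m2 p * Γ p = 0 ∧
        pT n2 p + pX (fun q => Γ q * n2 q) p - m1 p * Γ p = 0)
    (P : ℝ × ℝ → ℝ)
    (hP : P = fun q => m1 q * n1 q + m2 q * n2 q) :
    ∀ p : ℝ × ℝ, pT P p + Γ p * pX P p + 2 * pX Γ p * P p = 0 := by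
  subst hP
  intro p
  obtain ⟨eq_m1, eq_m2, eq_n1, eq_n2⟩ := hsys p
  have top_ne_zero : ((⊤ : ℕ∞) : WithTop ℕ∞) ≠ 0 := by simp
  exact stmt_4_general (hm1.differentiable top_ne_zero p) (hm2.differentiable top_ne_zero p)
    (hn1.differentiable top_ne_zero p) (hn2.differentiable top_ne_zero p)
    (hΓ.differentiable top_ne_zero p) eq_m1 eq_m2 eq_n1 eq_n2
end
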